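/- Let α > 0 and let a : ℤ³ → ℂ be such that the family k ↦ (1+α²‖k‖²)²‖a k‖² is summable. Then ∑_{k∈ℤ³} (D̂_N(α,‖k‖²) − (1+α²‖k‖²))² ‖a k‖² tends to 0 as N → ∞, where D̂_N(α,s) := ∑_{n=0}^{N} (α²s/(1+α²s))ⁿ. (This expresses that D_N(ω) → Aω in L² as N → ∞, for every ω in the Sobolev space H², where A = I − α²Δ.) -/

import Mathlib

open Filter Topology

/-- The Van Cittert deconvolution symbol `D̂_N(α,s) = ∑_{n=0}^N (α²s/(1+α²s))ⁿ`. -/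
noncomputable def deconvSymbol (α s : ℝ) (N : ℕ) : ℝ :=
  ∑ n ∈ Finset.range (N + 1), (α ^ 2 * s / (1 + α ^ 2 * s)) ^ n

/-- The squared Euclidean norm `|k|²` of a Fourier mode `k ∈ ℤ³`. -/
def sqNorm3 (k : Fin 3 → ℤ) : ℝ := ∑ i, ((k i : ℝ)) ^ 2

/-!
With `r = α²s / (1 + α²s)`, the symbol `D̂_N` is a partial sum of the geometric series of `r`, whose
sum is `(1 - r)⁻¹ = 1 + α²s`; hence the squared error of the mode `k` is `(r²)^(N+1)` times its
`H²` energy. As `0 ≤ r < 1`, each of these terms tends to `0` and is dominated by the `H²` energy.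
The convergence is not uniform in `k`, since `r → 1` as `s → ∞`.
-/

theorem tendsto_tsum_pow_smul_zero {ι R E : Type*} [SeminormedRing R] [NormOneClass R]
    [NormedAddCommGroup E] [CompleteSpace E] [Module R E] [IsBoundedSMul R E]
    {r : ι → R} {f : ι → E} (hr : ∀ k, ‖r k‖ < 1) (hf : Summable fun k => ‖f k‖) :
    Tendsto (fun n : ℕ => ∑' k, r k ^ n • f k) atTop (𝓝 0) := by
  have pointwise (k : ι) : Tendsto (fun n : ℕ => r k ^ n • f k) atTop (𝓝 0) := by
    simpa only [zero_smul] using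
      (tendsto_pow_atTop_nhds_zero_of_norm_lt_one (hr k)).smul_const (f k)
  have dominated (n : ℕ) (k : ι) : ‖r k ^ n • f k‖ ≤ ‖f k‖ := by
    have norm_pow_le_one : ‖r k ^ n‖ ≤ 1 :=
      (norm_pow_le (r k) n).trans (pow_le_one₀ (norm_nonneg _) (hr k).le)
    exact (norm_smul_le _ _).trans (mul_le_of_le_one_left (norm_nonneg _) norm_pow_le_one)
  simpa only [tsum_zero] using
    tendsto_tsum_of_dominated_convergence hf pointwise (.of_forall dominated)

theorem geom_sum_div_one_add {K : Type*} [Field K] {x : K} (hx : 1 + x ≠ 0) (n : ℕ) :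
    ∑ i ∈ Finset.range n, (x / (1 + x)) ^ i = (1 + x) * (1 - (x / (1 + x)) ^ n) := by
  have one_sub_ratio : 1 - x / (1 + x) = (1 + x)⁻¹ := by
    field_simp
    ring
  rw [← mul_neg_geom_sum, one_sub_ratio, mul_inv_cancel_left₀ hx]

theorem abs_div_one_add_lt_one {K : Type*} [Field K] [LinearOrder K] [IsStrictOrderedRing K]
    {x : K} (hx : 0 ≤ x) : |x / (1 + x)| < 1 := by
  rw [abs_of_nonneg (by positivity), div_lt_one (by positivity)]
  exact lt_one_add x

theorem deconvSymbol_sub_sq {α s : ℝ} (hs : 1 + α ^ 2 * s ≠ 0) (N : ℕ) :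
    (deconvSymbol α s N - (1 + α ^ 2 * s)) ^ 2 =
      ((α ^ 2 * s / (1 + α ^ 2 * s)) ^ 2) ^ (N + 1) * (1 + α ^ 2 * s) ^ 2 := by
  rw [deconvSymbol, geom_sum_div_one_add hs]
  ring

theorem sqNorm3_nonneg (k : Fin 3 → ℤ) : 0 ≤ sqNorm3 k :=
  Finset.sum_nonneg fun _ _ => sq_nonneg _

theorem deconv_tendsto_A_L2_general {ι : Type*} (α : ℝ) {s : ι → ℝ} (hs : ∀ k, 0 ≤ s k)
    {w : ι → ℝ} (hsum : Summable fun k => (1 + α ^ 2 * s k) ^ 2 * w k) :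
    Tendsto
      (fun N : ℕ => ∑' k, (deconvSymbol α (s k) N - (1 + α ^ 2 * s k)) ^ 2 * w k)
      atTop (𝓝 0) := by
  have symbol_nonneg (k : ι) : 0 ≤ α ^ 2 * s k := mul_nonneg (sq_nonneg α) (hs k)
  have ratio_sq_lt_one (k : ι) : ‖(α ^ 2 * s k / (1 + α ^ 2 * s k)) ^ 2‖ < 1 := by
    rw [norm_pow, Real.norm_eq_abs]
    exact pow_lt_one₀ (abs_nonneg _) (abs_div_one_add_lt_one (symbol_nonneg k)) two_ne_zero
  have error_eq (N : ℕ) (k : ι) :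
      (deconvSymbol α (s k) N - (1 + α ^ 2 * s k)) ^ 2 * w k =
        ((α ^ 2 * s k / (1 + α ^ 2 * s k)) ^ 2) ^ (N + 1) • ((1 + α ^ 2 * s k) ^ 2 * w k) := by
    have := symbol_nonneg k
    rw [deconvSymbol_sub_sq (by positivity), smul_eq_mul, mul_assoc]
  simp only [error_eq]
  exact (tendsto_tsum_pow_smul_zero ratio_sq_lt_one hsum.norm).comp (tendsto_add_atTop_nat 1)

/-- Symbol-level statement that `D_N(ω) → Aω` in `L²` as `N → ∞` for `ω ∈ H²`,
where `A = I - α²Δ`. -/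
theorem deconv_tendsto_A_L2 (α : ℝ) (hα : 0 < α) (a : (Fin 3 → ℤ) → ℂ)
    (hsum : Summable fun k => (1 + α ^ 2 * sqNorm3 k) ^ 2 * ‖a k‖ ^ 2) :
    Tendsto
      (fun N : ℕ => ∑' k : Fin 3 → ℤ,
        (deconvSymbol α (sqNorm3 k) N - (1 + α ^ 2 * sqNorm3 k)) ^ 2 * ‖a k‖ ^ 2)
      atTop (𝓝 0) :=
  deconv_tendsto_A_L2_general α sqNorm3_nonneg hsum
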